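/- Let 0 < α ≤ 1, λ > 0, T > 0, and let h : (0,T) → ℝ be a measurable, essentially bounded function for which there exists c_h > 0 with h(τ) ≥ c_h for almost every τ ∈ (0,T). Then ∫_0^T (T-τ)^{α-1} E_{α,α}(-λ (T-τ)^α) h(τ) dτ ≥ c_h T^α E_{α,α}(-λ T^α) > 0. -/

import Mathlib

open Real MeasureTheory intervalIntegral

/-- The two-parameter Mittag-Leffler function (real arguments),
with the convention `1/Γ = 0` at the poles of `Γ` (as in Mathlib's `Real.Gamma`). -/
noncomputable def mittagLeffler (α β x : ℝ) : ℝ :=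
  ∑' k : ℕ, x ^ k / Real.Gamma ((k : ℝ) * α + β)

/-!
The kernel `t ^ (β - 1) * E_{α,β}(-λ t ^ α)` is the continuum limit of the Taylor coefficients of
`(1 - z) ^ (α - β) / ((1 - z) ^ α + μ)`. For `0 < α ≤ 1` all coefficients of `(1 - z) ^ α` except
the constant one are nonpositive, and for `α ≤ β` those of `(1 - z) ^ (α - β)` are nonnegative, so
the Taylor coefficients solve a recurrence with nonnegative weights: they are nonnegative and
decrease in `μ`. Euler's product for `Γ` carries both properties to `E_{α,β}` on the negative
half-line, and analyticity makes the sign strict. For `β ≤ 1` the kernel is then decreasing in `t`,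
hence at least its value at `t = T`.
-/

open Filter Finset Topology

section Multichoose

variable {R : Type*} [CommRing R] [BinomialRing R]

lemma succ_mul_multichoose_succ (r : R) (n : ℕ) :
    (n + 1) * Ring.multichoose r (n + 1) = (r + n) * Ring.multichoose r n := by
  have := BinomialRing.toIsAddTorsionFree (R := R)
  have hsucc : (n + 1).factorial • Ring.multichoose r (n + 1) =
      n.factorial • Ring.multichoose r n * (r + n) := by
    simp only [Ring.factorial_nsmul_multichoose_eq_ascPochhammer,
      Polynomial.ascPochhammer_smeval_eq_eval, ascPochhammer_succ_eval]
  apply nsmul_right_injective n.factorial_ne_zero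
  simp only [nsmul_eq_mul, Nat.factorial_succ, Nat.cast_mul, Nat.cast_succ] at hsucc ⊢
  linear_combination hsucc

-- Vandermonde's identity, i.e. `(1 - z) ^ (-r) * (1 - z) ^ (-s) = (1 - z) ^ (-(r + s))`.
lemma sum_antidiagonal_multichoose_mul_multichoose (r s : R) (n : ℕ) :
    ∑ p ∈ antidiagonal n, Ring.multichoose r p.1 * Ring.multichoose s p.2 =
      Ring.multichoose (r + s) n := by
  have vandermonde := Ring.add_choose_eq n (Commute.all (-r) (-s))
  rw [← neg_add] at vandermonde
  have hsign : ∀ p ∈ antidiagonal n, Ring.choose (-r) p.1 * Ring.choose (-s) p.2 =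
      Int.negOnePow n • (Ring.multichoose r p.1 * Ring.multichoose s p.2) := fun p hp ↦ by
    rw [Ring.choose_neg', Ring.choose_neg', smul_mul_smul_comm, ← Int.negOnePow_add,
      ← Nat.cast_add, mem_antidiagonal.1 hp]
  rw [Ring.choose_neg', sum_congr rfl hsign, ← smul_sum] at vandermonde
  exact (smul_left_cancel _ vandermonde).symm

end Multichoose

section Field

variable {K : Type*} [Field K] [CharZero K]

lemma multichoose_succ_eq_mul_div (a : K) (n : ℕ) :
    Ring.multichoose a (n + 1) = Ring.multichoose a n * ((a + n) / (n + 1)) := by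
  rw [← mul_div_assoc, eq_div_iff n.cast_add_one_ne_zero]
  linear_combination succ_mul_multichoose_succ a n

lemma multichoose_eq_prod_div_factorial (a : K) (n : ℕ) :
    Ring.multichoose a n = (∏ j ∈ range n, (a + j)) / n.factorial := by
  induction n with
  | zero => simp
  | succ n ih =>
    rw [multichoose_succ_eq_mul_div, ih, prod_range_succ, Nat.factorial_succ, Nat.cast_mul,
      Nat.cast_succ]
    field_simp

end Field

section OrderedField

variable {K : Type*} [Field K] [LinearOrder K] [IsStrictOrderedRing K]

lemma multichoose_nonneg {a : K} (ha : 0 ≤ a) (n : ℕ) : 0 ≤ Ring.multichoose a n := by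
  induction n with
  | zero => simp
  | succ n ih =>
    rw [multichoose_succ_eq_mul_div]
    positivity

lemma multichoose_neg_succ_nonpos {a : K} (ha0 : 0 ≤ a) (ha1 : a ≤ 1) (n : ℕ) :
    Ring.multichoose (-a) (n + 1) ≤ 0 := by
  induction n with
  | zero => simpa using ha0
  | succ n ih =>
    rw [multichoose_succ_eq_mul_div]
    refine mul_nonpos_of_nonpos_of_nonneg ih (div_nonneg ?_ (by positivity))
    push_cast
    linarith [n.cast_nonneg (α := K)]

lemma abs_multichoose_le (a : K) (n : ℕ) : |Ring.multichoose a n| ≤ (1 + |a|) ^ n := by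
  induction n with
  | zero => simp
  | succ n ih =>
    have hratio : |(a + n) / (n + 1)| ≤ 1 + |a| := by
      rw [abs_div, abs_of_pos (by positivity : (0 : K) < n + 1), div_le_iff₀ (by positivity)]
      calc |a + n| ≤ |a| + n := by simpa using abs_add_le a n
        _ ≤ (1 + |a|) * (n + 1) := by nlinarith [abs_nonneg a, n.cast_nonneg (α := K)]
    rw [multichoose_succ_eq_mul_div, abs_mul, pow_succ]
    gcongr

end OrderedField

lemma gammaSeq_pos {a : ℝ} (ha : 0 < a) {n : ℕ} (hn : n ≠ 0) : 0 < GammaSeq a n := by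
  have : 0 < n := Nat.pos_of_ne_zero hn
  exact div_pos (by positivity) (prod_pos fun j _ ↦ by positivity)

lemma gammaSeq_succ (a : ℝ) {n : ℕ} (hn : n ≠ 0) :
    GammaSeq a (n + 1) = GammaSeq a n * (((n + 1 : ℝ) / n) ^ a / (1 + a / (n + 1))) := by
  have hn' : (0 : ℝ) < n := by positivity
  have hna : (n : ℝ) ^ a ≠ 0 := by positivity
  rw [GammaSeq, GammaSeq, prod_range_succ _ (n + 1), Nat.factorial_succ,
    div_rpow (by positivity) hn'.le, one_add_div (by positivity)]
  push_cast
  field_simp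
  ring

lemma one_add_div_succ_le_rpow {a : ℝ} (ha : 0 ≤ a) {n : ℕ} (hn : n ≠ 0) :
    1 + a / (n + 1) ≤ ((n + 1 : ℝ) / n) ^ a := by
  have : (0 : ℝ) < n := by positivity
  have hlog : 1 / (n + 1 : ℝ) ≤ log ((n + 1 : ℝ) / n) := by
    refine le_of_eq_of_le ?_ (one_sub_inv_le_log_of_pos (by positivity))
    field_simp
    ring
  calc 1 + a / (n + 1) ≤ exp (a / (n + 1)) := by linarith [add_one_le_exp (a / (n + 1 : ℝ))]
    _ ≤ exp (log ((n + 1 : ℝ) / n) * a) := by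
      rw [div_eq_mul_one_div, mul_comm]
      gcongr
    _ = ((n + 1 : ℝ) / n) ^ a := (rpow_def_of_pos (by positivity) a).symm

lemma monotone_gammaSeq {a : ℝ} (ha : 0 < a) : Monotone (GammaSeq a) := by
  refine monotone_nat_of_le_succ fun n ↦ ?_
  rcases eq_or_ne n 0 with rfl | hn
  · have hzero : GammaSeq a 0 = 0 := by simp [GammaSeq, ha.ne']
    exact hzero.trans_le (gammaSeq_pos ha one_ne_zero).le
  · rw [gammaSeq_succ a hn]
    refine le_mul_of_one_le_right (gammaSeq_pos ha hn).le ?_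
    rw [one_le_div (by positivity)]
    exact one_add_div_succ_le_rpow ha.le hn

lemma inv_gammaSeq_eq {a : ℝ} (ha : 0 < a) {n : ℕ} (hn : n ≠ 0) :
    (GammaSeq a n)⁻¹ = (a + n) / n * (n ^ (1 - a) * Ring.multichoose a n) := by
  have hn' : (0 : ℝ) < n := by positivity
  rw [GammaSeq, multichoose_eq_prod_div_factorial, prod_range_succ, rpow_sub hn', rpow_one]
  field_simp

lemma rpow_mul_multichoose_le_inv_gammaSeq {a : ℝ} (ha : 0 < a) {m n : ℕ} (hm : m ≠ 0)
    (hmn : m ≤ n) : n ^ (1 - a) * Ring.multichoose a n ≤ (GammaSeq a m)⁻¹ := by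
  have hn : n ≠ 0 := by omega
  have hn' : (0 : ℝ) < n := by positivity
  calc n ^ (1 - a) * Ring.multichoose a n
      ≤ (a + n) / n * (n ^ (1 - a) * Ring.multichoose a n) := by
        refine le_mul_of_one_le_left (mul_nonneg (by positivity) (multichoose_nonneg ha.le n)) ?_
        rw [one_le_div hn']
        linarith
    _ = (GammaSeq a n)⁻¹ := (inv_gammaSeq_eq ha hn).symm
    _ ≤ (GammaSeq a m)⁻¹ := inv_anti₀ (gammaSeq_pos ha hm) (monotone_gammaSeq ha hmn)

lemma inv_gammaSeq_le {a : ℝ} (ha : 0 < a) {n : ℕ} (hn : n ≠ 0) :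
    (GammaSeq a n)⁻¹ ≤ n ^ (1 - a) * (1 + a) ^ (n + 1) := by
  have hn' : (1 : ℝ) ≤ n := by exact_mod_cast Nat.one_le_iff_ne_zero.2 hn
  have hratio : (a + n) / n ≤ 1 + a := by
    rw [div_le_iff₀ (by positivity)]
    nlinarith
  have hcoeff : Ring.multichoose a n ≤ (1 + a) ^ n := by
    simpa only [abs_of_pos ha] using (le_abs_self _).trans (abs_multichoose_le a n)
  calc (GammaSeq a n)⁻¹ = (a + n) / n * (n ^ (1 - a) * Ring.multichoose a n) :=
        inv_gammaSeq_eq ha hn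
    _ ≤ (1 + a) * (n ^ (1 - a) * (1 + a) ^ n) := by
        gcongr
        exact mul_nonneg (by positivity) (multichoose_nonneg ha.le n)
    _ = n ^ (1 - a) * (1 + a) ^ (n + 1) := by ring

lemma tendsto_rpow_mul_multichoose {a : ℝ} (ha : 0 < a) :
    Tendsto (fun n : ℕ ↦ (n : ℝ) ^ (1 - a) * Ring.multichoose a n) atTop (𝓝 (Gamma a)⁻¹) := by
  have hlim : Tendsto (fun n : ℕ ↦ (n : ℝ) / (n + a) * (GammaSeq a n)⁻¹) atTop
      (𝓝 (1 * (Gamma a)⁻¹)) :=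
    (tendsto_natCast_div_add_atTop a).mul
      ((GammaSeq_tendsto_Gamma a).inv₀ (Gamma_pos_of_pos ha).ne')
  rw [one_mul] at hlim
  refine hlim.congr' ?_
  filter_upwards [eventually_ne_atTop 0] with n hn
  have : (0 : ℝ) < n := by positivity
  rw [inv_gammaSeq_eq ha hn]
  field_simp
  ring

lemma summable_pow_mul_one_add_abs_linear_pow {q : ℝ} (hq : |q| < 1) (a b : ℝ) (m : ℕ) :
    Summable fun k : ℕ ↦ q ^ k * (1 + |k * a + b|) ^ m := by
  have hs : Summable fun k : ℕ ↦ (k : ℝ) ^ m * |q| ^ k :=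
    summable_pow_mul_geometric_of_norm_lt_one m (by simpa using hq)
  refine (hs.mul_left ((1 + |a| + |b|) ^ m)).of_norm_bounded_eventually_nat ?_
  filter_upwards [eventually_ge_atTop 1] with k hk
  have hk' : (1 : ℝ) ≤ k := by exact_mod_cast hk
  have hlinear : 1 + |k * a + b| ≤ (1 + |a| + |b|) * k := by
    calc 1 + |k * a + b| ≤ 1 + (k * |a| + |b|) := by
          simpa [abs_mul] using abs_add_le (k * a) b
      _ ≤ (1 + |a| + |b|) * k := by nlinarith [abs_nonneg b]
  rw [norm_mul, norm_pow, norm_pow, norm_eq_abs, norm_of_nonneg (by positivity), ← mul_assoc,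
    ← mul_pow, mul_comm]
  gcongr

/-- For `|μ| < 1`, the coefficient of `z ^ n` in
`(1 - z) ^ (α - β) / ((1 - z) ^ α + μ) = ∑ k, (-μ) ^ k * (1 - z) ^ (-(k * α + β))`. It is the
discrete analogue of the kernel `t ^ (β - 1) * E_{α,β}(-μ t ^ α)` at time `t = n`. -/
noncomputable def discreteMittagLeffler (α β μ : ℝ) (n : ℕ) : ℝ :=
  ∑' k : ℕ, (-μ) ^ k * Ring.multichoose (k * α + β) n

section Discrete

variable {α β μ : ℝ}

lemma summable_discreteMittagLeffler (α β : ℝ) (hμ : |μ| < 1) (n : ℕ) :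
    Summable fun k : ℕ ↦ (-μ) ^ k * Ring.multichoose (k * α + β) n := by
  refine (summable_pow_mul_one_add_abs_linear_pow (by rwa [abs_abs]) α β n).of_norm_bounded
    fun k ↦ ?_
  rw [norm_mul, norm_pow, norm_neg, norm_eq_abs, norm_eq_abs]
  gcongr
  exact abs_multichoose_le _ n

-- Compares coefficients of `z ^ n` in `((1 - z) ^ α + μ) * D(z) = (1 - z) ^ (α - β)`.
lemma sum_antidiagonal_discreteMittagLeffler_mul (α β : ℝ) (hμ : |μ| < 1) (n : ℕ) :
    ∑ p ∈ antidiagonal n, discreteMittagLeffler α β μ p.1 * Ring.multichoose (-α) p.2 =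
      Ring.multichoose (β - α) n - μ * discreteMittagLeffler α β μ n := by
  have hs := summable_discreteMittagLeffler α β hμ
  have hshift (k : ℕ) : (k + 1 : ℕ) * α + (β - α) = k * α + β := by
    push_cast
    ring
  calc ∑ p ∈ antidiagonal n, discreteMittagLeffler α β μ p.1 * Ring.multichoose (-α) p.2
      = ∑' k : ℕ, ∑ p ∈ antidiagonal n,
          (-μ) ^ k * Ring.multichoose (k * α + β) p.1 * Ring.multichoose (-α) p.2 := by
        simp only [discreteMittagLeffler, ← tsum_mul_right]
        exact (Summable.tsum_finsetSum fun p _ ↦ (hs p.1).mul_right _).symm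
    _ = ∑' k : ℕ, (-μ) ^ k * Ring.multichoose (k * α + (β - α)) n := by
        refine tsum_congr fun k ↦ ?_
        simp only [mul_assoc, ← mul_sum]
        rw [sum_antidiagonal_multichoose_mul_multichoose, add_assoc, ← sub_eq_add_neg]
    _ = Ring.multichoose (β - α) n +
          ∑' k : ℕ, -μ * ((-μ) ^ k * Ring.multichoose (k * α + β) n) := by
        rw [(summable_discreteMittagLeffler α (β - α) hμ n).tsum_eq_zero_add]
        simp only [hshift, pow_succ', mul_assoc, pow_zero, one_mul, Nat.cast_zero, zero_mul,
          zero_add]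
    _ = Ring.multichoose (β - α) n - μ * discreteMittagLeffler α β μ n := by
        rw [tsum_mul_left, discreteMittagLeffler]
        ring

lemma one_add_mul_discreteMittagLeffler (α β : ℝ) (hμ : |μ| < 1) (n : ℕ) :
    (1 + μ) * discreteMittagLeffler α β μ n = Ring.multichoose (β - α) n +
      ∑ j ∈ range n, -Ring.multichoose (-α) (n - j) * discreteMittagLeffler α β μ j := by
  have hconv := sum_antidiagonal_discreteMittagLeffler_mul α β hμ n
  rw [Nat.sum_antidiagonal_eq_sum_range_succ
      (fun i j ↦ discreteMittagLeffler α β μ i * Ring.multichoose (-α) j),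
    sum_range_succ, Nat.sub_self, Ring.multichoose_zero_right, mul_one] at hconv
  simp only [neg_mul, sum_neg_distrib, mul_comm (Ring.multichoose (-α) _)]
  linear_combination hconv

lemma multichoose_neg_sub_nonpos (hα0 : 0 ≤ α) (hα1 : α ≤ 1) {n j : ℕ} (hj : j < n) :
    Ring.multichoose (-α) (n - j) ≤ 0 := by
  obtain ⟨i, hi⟩ := Nat.exists_eq_succ_of_ne_zero (Nat.sub_ne_zero_of_lt hj)
  exact hi ▸ multichoose_neg_succ_nonpos hα0 hα1 i

lemma discreteMittagLeffler_nonneg (hα0 : 0 ≤ α) (hα1 : α ≤ 1) (hαβ : α ≤ β) (hμ0 : 0 ≤ μ)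
    (hμ1 : μ < 1) (n : ℕ) : 0 ≤ discreteMittagLeffler α β μ n := by
  induction n using Nat.strong_induction_on with
  | _ n ih =>
    refine nonneg_of_mul_nonneg_right (a := 1 + μ) ?_ (by positivity)
    rw [one_add_mul_discreteMittagLeffler α β (by rwa [abs_of_nonneg hμ0])]
    refine add_nonneg (multichoose_nonneg (sub_nonneg.2 hαβ) n) (sum_nonneg fun j hj ↦ ?_)
    have hjn : j < n := mem_range.1 hj
    exact mul_nonneg (neg_nonneg.2 (multichoose_neg_sub_nonpos hα0 hα1 hjn)) (ih j hjn)

lemma antitoneOn_discreteMittagLeffler (hα0 : 0 ≤ α) (hα1 : α ≤ 1) (hαβ : α ≤ β) (n : ℕ) :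
    AntitoneOn (fun μ ↦ discreteMittagLeffler α β μ n) (Set.Ico 0 1) := by
  rintro μ ⟨hμ0, hμ1⟩ ν ⟨hν0, hν1⟩ hμν
  beta_reduce
  induction n using Nat.strong_induction_on with
  | _ n ih =>
    refine le_of_mul_le_mul_left ?_ (by positivity : 0 < 1 + μ)
    calc (1 + μ) * discreteMittagLeffler α β ν n ≤ (1 + ν) * discreteMittagLeffler α β ν n := by
          gcongr
          exact discreteMittagLeffler_nonneg hα0 hα1 hαβ hν0 hν1 n
      _ = Ring.multichoose (β - α) n +
            ∑ j ∈ range n, -Ring.multichoose (-α) (n - j) * discreteMittagLeffler α β ν j :=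
          one_add_mul_discreteMittagLeffler α β (by rwa [abs_of_nonneg hν0]) n
      _ ≤ Ring.multichoose (β - α) n +
            ∑ j ∈ range n, -Ring.multichoose (-α) (n - j) * discreteMittagLeffler α β μ j := by
          gcongr with j hj
          · exact neg_nonneg.2 (multichoose_neg_sub_nonpos hα0 hα1 (mem_range.1 hj))
          · exact ih j (mem_range.1 hj)
      _ = (1 + μ) * discreteMittagLeffler α β μ n :=
          (one_add_mul_discreteMittagLeffler α β (by rwa [abs_of_nonneg hμ0]) n).symm

end Discrete

section MittagLeffler

variable {α β : ℝ}

lemma eventually_summable_pow_mul_inv_gammaSeq (hα : 0 < α) (hβ : 0 < β) (x : ℝ) :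
    ∀ᶠ m : ℕ in atTop, Summable fun k : ℕ ↦ x ^ k * (GammaSeq (k * α + β) m)⁻¹ := by
  have hlim : Tendsto (fun m : ℕ ↦ |x| * (m : ℝ) ^ (-α)) atTop (𝓝 (|x| * 0)) :=
    ((tendsto_rpow_neg_atTop hα).comp tendsto_natCast_atTop_atTop).const_mul _
  rw [mul_zero] at hlim
  filter_upwards [hlim.eventually_lt_const one_pos, eventually_ne_atTop 0] with m hq hm
  have hm' : (0 : ℝ) < m := by positivity
  have hq' : |(|x| * (m : ℝ) ^ (-α))| < 1 := by rwa [abs_of_nonneg (by positivity)]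
  refine ((summable_pow_mul_one_add_abs_linear_pow hq' α β (m + 1)).mul_left
    ((m : ℝ) ^ (1 - β))).of_norm_bounded fun k ↦ ?_
  have ha : 0 < k * α + β := by positivity
  rw [norm_mul, norm_pow, norm_eq_abs, norm_inv, norm_of_nonneg (gammaSeq_pos ha hm).le]
  calc |x| ^ k * (GammaSeq (k * α + β) m)⁻¹
      ≤ |x| ^ k * (m ^ (1 - (k * α + β)) * (1 + (k * α + β)) ^ (m + 1)) := by
        gcongr
        exact inv_gammaSeq_le ha hm
    _ = m ^ (1 - β) * ((|x| * m ^ (-α)) ^ k * (1 + |k * α + β|) ^ (m + 1)) := by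
        rw [abs_of_pos ha, show 1 - (k * α + β) = (1 - β) + -α * k by ring, rpow_add hm',
          rpow_mul_natCast hm'.le]
        ring

lemma summable_mittagLeffler (hα : 0 < α) (hβ : 0 < β) (x : ℝ) :
    Summable fun k : ℕ ↦ x ^ k / Gamma (k * α + β) := by
  obtain ⟨m, hs, hm⟩ := ((eventually_summable_pow_mul_inv_gammaSeq hα hβ |x|).and
    (eventually_ne_atTop 0)).exists
  refine hs.of_norm_bounded fun k ↦ ?_
  have ha : 0 < k * α + β := by positivity
  rw [norm_div, norm_pow, norm_eq_abs, norm_of_nonneg (Gamma_pos_of_pos ha).le, div_eq_mul_inv]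
  gcongr
  · exact gammaSeq_pos ha hm
  · exact (monotone_gammaSeq ha).ge_of_tendsto (GammaSeq_tendsto_Gamma _) m

lemma tendsto_rpow_mul_discreteMittagLeffler (hα : 0 < α) (hβ : 0 < β) (x : ℝ) :
    Tendsto (fun n : ℕ ↦ (n : ℝ) ^ (1 - β) * discreteMittagLeffler α β (-x * n ^ (-α)) n) atTop
      (𝓝 (mittagLeffler α β x)) := by
  obtain ⟨m, hs, hm⟩ := ((eventually_summable_pow_mul_inv_gammaSeq hα hβ |x|).and
    (eventually_ne_atTop 0)).exists
  have hlim : Tendsto (fun n : ℕ ↦ ∑' k : ℕ,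
      x ^ k * ((n : ℝ) ^ (1 - (k * α + β)) * Ring.multichoose (k * α + β) n)) atTop
      (𝓝 (mittagLeffler α β x)) := by
    refine tendsto_tsum_of_dominated_convergence hs (fun k ↦ ?_) ?_
    · rw [div_eq_mul_inv]
      exact (tendsto_rpow_mul_multichoose (by positivity)).const_mul _
    · filter_upwards [eventually_ge_atTop m] with n hn k
      have ha : 0 < k * α + β := by positivity
      rw [norm_mul, norm_pow, norm_eq_abs,
        norm_of_nonneg (mul_nonneg (by positivity) (multichoose_nonneg ha.le n))]
      gcongr
      exact rpow_mul_multichoose_le_inv_gammaSeq ha hm hn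
  refine hlim.congr' ?_
  filter_upwards [eventually_ne_atTop 0] with n hn
  have hn' : (0 : ℝ) < n := by positivity
  rw [discreteMittagLeffler, ← tsum_mul_left]
  refine tsum_congr fun k ↦ ?_
  rw [show 1 - (k * α + β) = (1 - β) + -α * k by ring, rpow_add hn', rpow_mul_natCast hn'.le]
  ring

lemma eventually_neg_mul_rpow_neg_mem_Ico (hα : 0 < α) {x : ℝ} (hx : x ≤ 0) :
    ∀ᶠ n : ℕ in atTop, -x * (n : ℝ) ^ (-α) ∈ Set.Ico 0 1 := by
  have hlim : Tendsto (fun n : ℕ ↦ -x * (n : ℝ) ^ (-α)) atTop (𝓝 (-x * 0)) :=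
    ((tendsto_rpow_neg_atTop hα).comp tendsto_natCast_atTop_atTop).const_mul _
  rw [mul_zero] at hlim
  filter_upwards [hlim.eventually_lt_const one_pos] with n hn
  exact ⟨mul_nonneg (neg_nonneg.2 hx) (by positivity), hn⟩

lemma mittagLeffler_nonneg (hα0 : 0 < α) (hα1 : α ≤ 1) (hαβ : α ≤ β) {x : ℝ} (hx : x ≤ 0) :
    0 ≤ mittagLeffler α β x := by
  refine ge_of_tendsto (tendsto_rpow_mul_discreteMittagLeffler hα0 (hα0.trans_le hαβ) x) ?_
  filter_upwards [eventually_neg_mul_rpow_neg_mem_Ico hα0 hx] with n hn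
  exact mul_nonneg (by positivity)
    (discreteMittagLeffler_nonneg hα0.le hα1 hαβ hn.1 hn.2 n)

lemma monotoneOn_mittagLeffler (hα0 : 0 < α) (hα1 : α ≤ 1) (hαβ : α ≤ β) :
    MonotoneOn (mittagLeffler α β) (Set.Iic 0) := by
  intro x hx y hy hxy
  have hβ : 0 < β := hα0.trans_le hαβ
  refine le_of_tendsto_of_tendsto (tendsto_rpow_mul_discreteMittagLeffler hα0 hβ x)
    (tendsto_rpow_mul_discreteMittagLeffler hα0 hβ y) ?_
  filter_upwards [eventually_neg_mul_rpow_neg_mem_Ico hα0 hx,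
    eventually_neg_mul_rpow_neg_mem_Ico hα0 hy] with n hxn hyn
  gcongr
  exact antitoneOn_discreteMittagLeffler hα0.le hα1 hαβ n hyn hxn (by gcongr)

lemma analyticOnNhd_mittagLeffler (hα : 0 < α) (hβ : 0 < β) :
    AnalyticOnNhd ℝ (mittagLeffler α β) Set.univ := by
  set p := FormalMultilinearSeries.ofScalars ℝ fun k : ℕ ↦ (Gamma (k * α + β))⁻¹ with hp
  have hradius : p.radius = ⊤ := by
    refine p.radius_eq_top_of_summable_norm fun r ↦ ?_
    refine (summable_mittagLeffler hα hβ r).congr fun k ↦ ?_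
    have ha : 0 < k * α + β := by positivity
    rw [hp, FormalMultilinearSeries.ofScalars_norm, norm_inv,
      norm_of_nonneg (Gamma_pos_of_pos ha).le, div_eq_inv_mul]
  have hsum : mittagLeffler α β = p.sum := by
    funext x
    refine tsum_congr fun k ↦ ?_
    rw [hp, FormalMultilinearSeries.ofScalars_apply_eq, smul_eq_mul, div_eq_inv_mul]
  have hball := p.hasFPowerSeriesOnBall (by simp [hradius])
  rw [hradius, ← hsum] at hball
  simpa only [Metric.eball_top] using hball.analyticOnNhd

lemma continuous_mittagLeffler (hα : 0 < α) (hβ : 0 < β) : Continuous (mittagLeffler α β) :=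
  continuousOn_univ.1 (analyticOnNhd_mittagLeffler hα hβ).continuousOn

lemma mittagLeffler_zero (α β : ℝ) : mittagLeffler α β 0 = (Gamma β)⁻¹ := by
  rw [mittagLeffler, tsum_eq_single 0 fun k hk ↦ by simp [hk]]
  simp

-- A zero at `x ≤ 0` would force `E_{α,β}` to vanish on `(-∞, x]`, hence everywhere by analyticity.
lemma mittagLeffler_pos (hα0 : 0 < α) (hα1 : α ≤ 1) (hαβ : α ≤ β) {x : ℝ} (hx : x ≤ 0) :
    0 < mittagLeffler α β x := by
  have hβ : 0 < β := hα0.trans_le hαβ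
  refine (mittagLeffler_nonneg hα0 hα1 hαβ hx).lt_of_ne' fun hzero ↦ ?_
  have hvanish : ∀ y < x, mittagLeffler α β y = 0 := fun y hy ↦
    le_antisymm (hzero ▸ monotoneOn_mittagLeffler hα0 hα1 hαβ (hy.le.trans hx) hx hy.le)
      (mittagLeffler_nonneg hα0 hα1 hαβ (hy.le.trans hx))
  have hfun : mittagLeffler α β = 0 :=
    (analyticOnNhd_mittagLeffler hα0 hβ).eq_of_eventuallyEq analyticOnNhd_const
      (eventually_of_mem (Iio_mem_nhds (sub_one_lt x)) hvanish)
  have hGamma : (Gamma β)⁻¹ = 0 := by rw [← mittagLeffler_zero α β, hfun, Pi.zero_apply]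
  exact inv_ne_zero (Gamma_pos_of_pos hβ).ne' hGamma

lemma antitoneOn_rpow_mul_mittagLeffler (hα0 : 0 < α) (hα1 : α ≤ 1) (hαβ : α ≤ β) (hβ1 : β ≤ 1)
    {lam : ℝ} (hlam : 0 ≤ lam) :
    AntitoneOn (fun t ↦ t ^ (β - 1) * mittagLeffler α β (-lam * t ^ α)) (Set.Ioi 0) := by
  intro s hs t ht hst
  rw [Set.mem_Ioi] at hs ht
  have harg : ∀ r : ℝ, 0 < r → -lam * r ^ α ≤ 0 := fun r hr ↦
    mul_nonpos_of_nonpos_of_nonneg (neg_nonpos.2 hlam) (by positivity)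
  have hmono : mittagLeffler α β (-lam * t ^ α) ≤ mittagLeffler α β (-lam * s ^ α) :=
    monotoneOn_mittagLeffler hα0 hα1 hαβ (harg t ht) (harg s hs)
      (mul_le_mul_of_nonpos_left (by gcongr) (neg_nonpos.2 hlam))
  exact mul_le_mul (rpow_le_rpow_of_nonpos hs hst (sub_nonpos.2 hβ1)) hmono
    (mittagLeffler_nonneg hα0 hα1 hαβ (harg t ht)) (by positivity)

lemma intervalIntegrable_rpow_mul_mittagLeffler (hα : 0 < α) (hβ : 0 < β) (lam a b : ℝ) :
    IntervalIntegrable (fun t ↦ t ^ (β - 1) * mittagLeffler α β (-lam * t ^ α)) volume a b :=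
  (intervalIntegrable_rpow' (by linarith)).mul_continuousOn
    ((continuous_mittagLeffler hα hβ).comp
      (continuous_const.mul (continuous_rpow_const hα.le))).continuousOn

end MittagLeffler

lemma intervalIntegrable_mul_of_ae_abs_le {f g : ℝ → ℝ} {a b M : ℝ} (hab : a ≤ b)
    (hf : IntervalIntegrable f volume a b)
    (hg : AEStronglyMeasurable g (volume.restrict (Set.Ioo a b)))
    (hM : ∀ᵐ τ ∂(volume.restrict (Set.Ioo a b)), |g τ| ≤ M) :
    IntervalIntegrable (fun τ ↦ f τ * g τ) volume a b := by
  rw [intervalIntegrable_iff_integrableOn_Ioo_of_le hab] at hf ⊢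
  exact Integrable.mul_bdd hf hg hM

lemma mul_le_integral_mul_of_antitoneOn {k h : ℝ → ℝ} {T c : ℝ} (hT : 0 ≤ T)
    (hk : AntitoneOn k (Set.Ioc 0 T)) (hkT : 0 ≤ k T) (hc : 0 ≤ c)
    (hint : IntervalIntegrable (fun τ ↦ k (T - τ) * h τ) volume 0 T)
    (hlower : ∀ᵐ τ ∂(volume.restrict (Set.Ioo 0 T)), c ≤ h τ) :
    T * (k T * c) ≤ ∫ τ in (0 : ℝ)..T, k (T - τ) * h τ := by
  have hconst : T * (k T * c) = ∫ _ in (0 : ℝ)..T, k T * c := by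
    rw [intervalIntegral.integral_const, sub_zero, smul_eq_mul]
  rw [hconst]
  refine integral_mono_ae_restrict hT intervalIntegrable_const hint ?_
  rw [← restrict_Ioo_eq_restrict_Icc]
  filter_upwards [ae_restrict_mem measurableSet_Ioo, hlower] with τ hτ hcτ
  have hkτ : k T ≤ k (T - τ) :=
    hk ⟨sub_pos.2 hτ.2, sub_le_self T hτ.1.le⟩ ⟨hτ.1.trans hτ.2, le_rfl⟩ (sub_le_self T hτ.1.le)
  exact mul_le_mul hkτ hcτ hc (hkT.trans hkτ)

theorem integral_lower_bound_general {α β lam T c : ℝ} (hα0 : 0 < α) (hα1 : α ≤ 1) (hαβ : α ≤ β)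
    (hβ1 : β ≤ 1) (hlam : 0 ≤ lam) (hT : 0 < T) (hc : 0 < c) {h : ℝ → ℝ}
    (hint : IntervalIntegrable
      (fun τ ↦ (T - τ) ^ (β - 1) * mittagLeffler α β (-lam * (T - τ) ^ α) * h τ) volume 0 T)
    (hlower : ∀ᵐ τ ∂(volume.restrict (Set.Ioo 0 T)), c ≤ h τ) :
    c * T ^ β * mittagLeffler α β (-lam * T ^ α)
      ≤ (∫ τ in (0 : ℝ)..T,
          (T - τ) ^ (β - 1) * mittagLeffler α β (-lam * (T - τ) ^ α) * h τ) ∧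
    0 < c * T ^ β * mittagLeffler α β (-lam * T ^ α) := by
  have hpos : 0 < mittagLeffler α β (-lam * T ^ α) :=
    mittagLeffler_pos hα0 hα1 hαβ
      (mul_nonpos_of_nonpos_of_nonneg (neg_nonpos.2 hlam) (by positivity))
  refine ⟨?_, by positivity⟩
  have hanti := (antitoneOn_rpow_mul_mittagLeffler hα0 hα1 hαβ hβ1 hlam).mono
    (Set.Ioc_subset_Ioi_self : Set.Ioc 0 T ⊆ Set.Ioi 0)
  calc c * T ^ β * mittagLeffler α β (-lam * T ^ α)
      = T * (T ^ (β - 1) * mittagLeffler α β (-lam * T ^ α) * c) := by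
        rw [rpow_sub_one hT.ne']
        field_simp
    _ ≤ ∫ τ in (0 : ℝ)..T,
          (T - τ) ^ (β - 1) * mittagLeffler α β (-lam * (T - τ) ^ α) * h τ :=
        mul_le_integral_mul_of_antitoneOn hT.le hanti (by positivity) hc.le hint hlower

theorem integral_lower_bound (α lam T : ℝ) (hα0 : 0 < α) (hα1 : α ≤ 1)
    (hlam : 0 < lam) (hT : 0 < T)
    (h : ℝ → ℝ) (hmeas : Measurable h)
    (hbdd : ∃ M : ℝ, ∀ᵐ τ ∂(volume.restrict (Set.Ioo 0 T)), |h τ| ≤ M)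
    (ch : ℝ) (hch : 0 < ch)
    (hlower : ∀ᵐ τ ∂(volume.restrict (Set.Ioo 0 T)), ch ≤ h τ) :
    ch * T ^ α * mittagLeffler α α (-lam * T ^ α)
      ≤ (∫ τ in (0:ℝ)..T,
          (T - τ) ^ (α - 1) * mittagLeffler α α (-lam * (T - τ) ^ α) * h τ) ∧
    0 < ch * T ^ α * mittagLeffler α α (-lam * T ^ α) := by
  obtain ⟨M, hM⟩ := hbdd
  have hkernel : IntervalIntegrable
      (fun τ ↦ (T - τ) ^ (α - 1) * mittagLeffler α α (-lam * (T - τ) ^ α)) volume 0 T := by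
    simpa using ((intervalIntegrable_rpow_mul_mittagLeffler hα0 hα0 lam 0 T).comp_sub_left T).symm
  exact integral_lower_bound_general hα0 hα1 le_rfl hα1 hlam.le hT hch
    (intervalIntegrable_mul_of_ae_abs_le hT.le hkernel hmeas.aestronglyMeasurable hM) hlower
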